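/- Let a, b ∈ (0, π/4). For t ∈ (0,1) set D(t) = cos((π/2 − a)t + a) · sin((π/2 − b)t) · sin(bt) · sin(a(1−t)), which is positive on (0,1), and define η_1(t) = cos((π − a − b)t + a) · sin(bt) · sin(a(1−t)) / D(t)^{2/3}, η_2(t) = cos((π/2 − a + b)t + a) · sin((π/2 − b)t) · sin(a(1−t)) / D(t)^{2/3}, η_3(t) = cos((π/2 − 2a)t + 2a) · sin((π/2 − b)t) · sin(bt) / D(t)^{2/3} (real 2/3 power of a positive real). Then η_1, η_2, η_3 are differentiable on (0,1) and for every t ∈ (0,1) one has η_1'(t) < 0, η_2'(t) < 0 and η_3'(t) > 0. -/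

import Mathlib

open Real

/-!
Since `sin (u - v) = sin u * sin v * (cot v - cot u)`, each `ηᵢ` is a difference `w` of two
cotangents times `D ^ (1/3)`, so `ηᵢ'` has the sign of `w' + w * L / 3` with `L = D' / D`, again a
combination of cotangents. For `η₁` and `η₂`, the bounds `x * cot x < 1` and `cot x < x / sin x ^ 2`
show that `w' < 0` dominates. For `η₃`, the terms of `L` in `b` have the right sign, and the others
are controlled by a trigonometric inequality in the sum `s` and the difference `d` of two angles.
As a function of `s`, the difference of its two sides increases and then decreases, so it suffices
to check `s = d`, where there is equality, and `s = π / 2`.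
-/

section Cotangent

lemma hasDerivAt_cot {x : ℝ} (hx : sin x ≠ 0) : HasDerivAt cot (-(1 / sin x ^ 2)) x := by
  rw [show cot = fun y ↦ cos y / sin y from funext cot_eq_cos_div_sin]
  refine ((hasDerivAt_cos x).div (hasDerivAt_sin x) hx).congr_deriv ?_
  rw [← sin_sq_add_cos_sq x]
  ring

lemma hasDerivAt_cot_comp {u : ℝ → ℝ} {u' t : ℝ} (hu : HasDerivAt u u' t)
    (ht : sin (u t) ≠ 0) : HasDerivAt (fun r ↦ cot (u r)) (-(u' / sin (u t) ^ 2)) t :=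
  ((hasDerivAt_cot ht).comp t hu).congr_deriv (by ring)

lemma sin_sub_eq_mul_cot_sub_cot {u v : ℝ} (hu : sin u ≠ 0) (hv : sin v ≠ 0) :
    sin (u - v) = sin u * sin v * (cot v - cot u) := by
  rw [sin_sub, cot_eq_cos_div_sin, cot_eq_cos_div_sin]
  field_simp

lemma cot_pos_of_pos_of_lt_pi_div_two {x : ℝ} (h0 : 0 < x) (h1 : x < π / 2) : 0 < cot x := by
  rw [← tan_inv_eq_cot]
  exact inv_pos.2 (tan_pos_of_pos_of_lt_pi_div_two h0 h1)

lemma mul_cot_lt_one {x : ℝ} (h0 : 0 < x) (h1 : x < π / 2) : x * cot x < 1 := by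
  rw [← tan_inv_eq_cot, ← div_eq_mul_inv, div_lt_one (tan_pos_of_pos_of_lt_pi_div_two h0 h1)]
  exact lt_tan h0 h1

lemma cot_lt_div_sin_sq {x : ℝ} (h0 : 0 < x) (hx : sin x ≠ 0) : cot x < x / sin x ^ 2 := by
  have h : cos x * sin x < x := by linarith [sin_lt (mul_pos two_pos h0), sin_two_mul x]
  calc cot x = cos x * sin x / sin x ^ 2 := by rw [cot_eq_cos_div_sin]; field_simp
    _ < x / sin x ^ 2 := by gcongr

lemma antitoneOn_mul_cot : AntitoneOn (fun x ↦ x * cot x) (Set.Ioo 0 π) := by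
  have hd : ∀ x ∈ Set.Ioo 0 π,
      HasDerivAt (fun x ↦ x * cot x) (1 * cot x + x * -(1 / sin x ^ 2)) x := fun x hx ↦
    (hasDerivAt_id x).mul (hasDerivAt_cot (sin_pos_of_mem_Ioo hx).ne')
  refine antitoneOn_of_hasDerivWithinAt_nonpos (convex_Ioo 0 π)
    (fun x hx ↦ (hd x hx).continuousAt.continuousWithinAt)
    (fun x hx ↦ (hd x (interior_subset hx)).hasDerivWithinAt) fun x hx ↦ ?_
  have hx' := interior_subset hx
  linarith [cot_lt_div_sin_sq hx'.1 (sin_pos_of_mem_Ioo hx').ne', mul_one_div x (sin x ^ 2)]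

lemma cot_lt_cot_of_lt {x y : ℝ} (h0 : 0 < x) (hxy : x < y) (hy : y < π) : cot y < cot x := by
  have hx := sin_pos_of_pos_of_lt_pi h0 (hxy.trans hy)
  have hy' := sin_pos_of_pos_of_lt_pi (h0.trans hxy) hy
  have h : 0 < sin (y - x) := sin_pos_of_pos_of_lt_pi (sub_pos.2 hxy) (by linarith)
  rw [sin_sub_eq_mul_cot_sub_cot hy'.ne' hx.ne'] at h
  exact sub_pos.1 (pos_of_mul_pos_right h (by positivity))

end Cotangent

section TrigonometricInequality

lemma min_le_of_hasDerivAt_mul_antitoneOn {f p q : ℝ → ℝ} {l r x : ℝ}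
    (hf : ∀ y ∈ Set.Icc l r, HasDerivAt f (p y * q y) y) (hp : ∀ y ∈ Set.Icc l r, 0 ≤ p y)
    (hq : AntitoneOn q (Set.Icc l r)) (hx : x ∈ Set.Icc l r) : min (f l) (f r) ≤ f x := by
  have hcont : ContinuousOn f (Set.Icc l r) := fun y hy ↦ (hf y hy).continuousAt.continuousWithinAt
  rcases le_total 0 (q x) with h | h
  · have hsub : Set.Icc l x ⊆ Set.Icc l r := Set.Icc_subset_Icc_right hx.2
    have hmono : MonotoneOn f (Set.Icc l x) :=
      monotoneOn_of_hasDerivWithinAt_nonneg (convex_Icc l x) (hcont.mono hsub)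
        (fun y hy ↦ (hf y (hsub (interior_subset hy))).hasDerivWithinAt) fun y hy ↦
        have hy := interior_subset hy
        mul_nonneg (hp y (hsub hy)) (h.trans (hq (hsub hy) hx hy.2))
    exact min_le_of_left_le (hmono ⟨le_rfl, hx.1⟩ ⟨hx.1, le_rfl⟩ hx.1)
  · have hsub : Set.Icc x r ⊆ Set.Icc l r := Set.Icc_subset_Icc_left hx.1
    have hanti : AntitoneOn f (Set.Icc x r) :=
      antitoneOn_of_hasDerivWithinAt_nonpos (convex_Icc x r) (hcont.mono hsub)
        (fun y hy ↦ (hf y (hsub (interior_subset hy))).hasDerivWithinAt) fun y hy ↦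
        have hy := interior_subset hy
        mul_nonpos_of_nonneg_of_nonpos (hp y (hsub hy)) ((hq hx (hsub hy) hy.1).trans h)
    exact min_le_of_right_le (hanti ⟨le_rfl, hx.2⟩ ⟨hx.2, le_rfl⟩ hx.2)

-- By concavity `x / π ≤ sin (x / 3) ≤ 1 / 2`, and `3 * s - 4 * s ^ 3` increases on `[0, 1 / 2]`.
lemma three_mul_sub_four_mul_cube_le_sin {x : ℝ} (h0 : 0 ≤ x) (h1 : x ≤ π / 2) :
    3 * (x / π) - 4 * (x / π) ^ 3 ≤ sin x := by
  have hw0 : 0 ≤ x / π := by positivity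
  have hw1 : x / π ≤ 1 / 2 := by rw [div_le_iff₀ pi_pos]; linarith
  have hlow : x / π ≤ sin (x / 3) := by
    have h := strictConcaveOn_sin_Icc.concaveOn.2 ⟨le_rfl, pi_pos.le⟩
      (⟨by positivity, by linarith [pi_pos]⟩ : π / 6 ∈ Set.Icc 0 π)
      (by linarith : 0 ≤ 1 - 2 * (x / π)) (by linarith : 0 ≤ 2 * (x / π)) (by ring)
    have hx : 2 * (x / π) * (π / 6) = x / 3 := by field_simp; ring
    simp only [smul_eq_mul, sin_zero, sin_pi_div_six, mul_zero, zero_add, hx] at h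
    linarith
  have hup : sin (x / 3) ≤ 1 / 2 := by
    rw [← sin_pi_div_six]
    exact sin_le_sin_of_le_of_le_pi_div_two (by linarith) (by linarith) (by linarith)
  have htriple : sin x = 3 * sin (x / 3) - 4 * sin (x / 3) ^ 3 := by
    rw [← sin_three_mul, mul_div_cancel₀ x three_ne_zero]
  rw [htriple]
  generalize sin (x / 3) = s at *
  generalize x / π = w at *
  have hquad : 4 * (s ^ 2 + s * w + w ^ 2) ≤ 3 := by nlinarith
  linarith [mul_nonneg (sub_nonneg.2 hlow) (sub_nonneg.2 hquad)]

lemma three_mul_le_pi_mul_sin_add_mul_sin_sq {d : ℝ} (h0 : 0 ≤ d) (h1 : d ≤ π / 2) :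
    3 * d ≤ π * sin d + d * sin d ^ 2 := by
  have hcubic : 3 * d - d * (2 / π * d) ^ 2 ≤ π * sin d :=
    calc 3 * d - d * (2 / π * d) ^ 2 = π * (3 * (d / π) - 4 * (d / π) ^ 3) := by field_simp; ring
      _ ≤ π * sin d := by gcongr; exact three_mul_sub_four_mul_cube_le_sin h0 h1
  have hlinear : d * (2 / π * d) ^ 2 ≤ d * sin d ^ 2 := by gcongr; exact mul_le_sin h0 h1
  linarith

lemma three_mul_one_sub_cos_mul_cos_le {d s : ℝ} (h0 : 0 < d) (hds : d ≤ s) (hs : s ≤ π / 2) :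
    3 * d * (1 - cos s * cos d) ≤ 2 * s * sin s * sin d + d * sin d ^ 2 := by
  set f : ℝ → ℝ := fun x ↦ 2 * x * sin x * sin d + d * sin d ^ 2 - 3 * d * (1 - cos x * cos d)
    with hf
  have hIoo : Set.Icc d (π / 2) ⊆ Set.Ioo 0 π := fun x hx ↦
    ⟨h0.trans_le hx.1, hx.2.trans_lt (half_lt_self pi_pos)⟩
  have hsin : ∀ x ∈ Set.Icc d (π / 2), 0 < sin x := fun x hx ↦ sin_pos_of_mem_Ioo (hIoo hx)
  have hd : d ∈ Set.Icc d (π / 2) := ⟨le_rfl, hds.trans hs⟩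
  have hderiv : ∀ x ∈ Set.Icc d (π / 2), HasDerivAt f
      (sin x * sin d * (2 + 2 * (x * cot x) - 3 * (d * cot d))) x := by
    intro x hx
    have hx' := (hsin x hx).ne'
    have hd' := (hsin d hd).ne'
    refine ((((((hasDerivAt_id x).const_mul 2).mul (hasDerivAt_sin x)).mul_const (sin d)).add_const
      (d * sin d ^ 2)).sub ((((hasDerivAt_cos x).mul_const (cos d)).const_sub 1).const_mul
      (3 * d))).congr_deriv ?_
    simp only [cot_eq_cos_div_sin, id_eq]
    field_simp
  have hanti : AntitoneOn (fun x ↦ 2 + 2 * (x * cot x) - 3 * (d * cot d)) (Set.Icc d (π / 2)) := by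
    intro x hx y hy hxy
    have := antitoneOn_mul_cot (hIoo hx) (hIoo hy) hxy
    dsimp only at this ⊢
    linarith
  have hmin := min_le_of_hasDerivAt_mul_antitoneOn hderiv
    (fun x hx ↦ (mul_pos (hsin x hx) (hsin d hd)).le) hanti ⟨hds, hs⟩
  have hleft : f d = 0 := by
    simp only [hf]
    linear_combination 3 * d * sin_sq_add_cos_sq d
  have hright : 0 ≤ f (π / 2) := by
    simp only [hf, sin_pi_div_two, cos_pi_div_two]
    linarith [three_mul_le_pi_mul_sin_add_mul_sin_sq h0.le hd.2]
  rw [hleft, min_eq_left hright] at hmin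
  exact sub_nonneg.1 hmin

lemma cot_sub_cot_mul_add_le {x y : ℝ} (h0 : 0 < x) (hxy : x < y) (hsum : x + y ≤ π / 2) :
    (cot x - cot y) * (x * cot x + y * cot y) ≤ 3 * (x / sin x ^ 2 - y / sin y ^ 2) := by
  have hsx : 0 < sin x := sin_pos_of_pos_of_lt_pi h0 (by linarith [pi_pos])
  have hsy : 0 < sin y := sin_pos_of_pos_of_lt_pi (by linarith) (by linarith [pi_pos])
  have hkey := three_mul_one_sub_cos_mul_cos_le (d := y - x) (s := y + x) (by linarith)
    (by linarith) (by linarith)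
  have hdiff : sin y ^ 2 - sin x ^ 2 = sin (y + x) * sin (y - x) := by
    rw [sin_add, sin_sub]
    linear_combination sin x ^ 2 * sin_sq_add_cos_sq y - sin y ^ 2 * sin_sq_add_cos_sq x
  have hsq : sin y ^ 2 + sin x ^ 2 = 1 - cos (y + x) * cos (y - x) := by
    rw [cos_add, cos_sub]
    linear_combination (1 - sin x ^ 2) * sin_sq_add_cos_sq y + cos y ^ 2 * sin_sq_add_cos_sq x
  have hmix : 2 * (x * cos x * sin y + y * cos y * sin x) =
      (y + x) * sin (y + x) - (y - x) * sin (y - x) := by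
    rw [sin_add, sin_sub]
    ring
  have hclear : sin (y - x) * (x * cos x * sin y + y * cos y * sin x) ≤
      3 * (x * sin y ^ 2 - y * sin x ^ 2) := by
    rw [← hsq] at hkey
    linear_combination hkey / 2 + sin (y - x) / 2 * hmix - 3 / 2 * (y + x) * hdiff
  calc (cot x - cot y) * (x * cot x + y * cot y)
      = sin (y - x) * (x * cos x * sin y + y * cos y * sin x) / (sin x ^ 2 * sin y ^ 2) := by
        rw [sin_sub_eq_mul_cot_sub_cot hsy.ne' hsx.ne', cot_eq_cos_div_sin, cot_eq_cos_div_sin]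
        field_simp
    _ ≤ 3 * (x * sin y ^ 2 - y * sin x ^ 2) / (sin x ^ 2 * sin y ^ 2) := by gcongr
    _ = 3 * (x / sin x ^ 2 - y / sin y ^ 2) := by field_simp

end TrigonometricInequality

section LogDeriv

lemma hasDerivAt_mul_rpow {w P : ℝ → ℝ} {w' p t : ℝ} (hw : HasDerivAt w w' t)
    (hP : DifferentiableAt ℝ P t) (hpos : 0 < P t) :
    HasDerivAt (fun r ↦ w r * P r ^ p) (P t ^ p * (w' + p * (w t * logDeriv P t))) t := by
  refine (hw.mul (hP.hasDerivAt.rpow_const (Or.inl hpos.ne'))).congr_deriv ?_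
  rw [logDeriv_apply, rpow_sub_one hpos.ne']
  ring

lemma logDeriv_sin_comp {u : ℝ → ℝ} {t : ℝ} (hu : DifferentiableAt ℝ u t) :
    logDeriv (fun r ↦ sin (u r)) t = deriv u t * cot (u t) := by
  have h := logDeriv_comp (f := sin) differentiableAt_sin hu
  rwa [logDeriv_sin, mul_comm] at h

lemma cos_mul_sin_mul_sin_div_rpow {c u v x y D q : ℝ} (hc : c + (u - v) = π / 2)
    (hD : D = sin u * sin v * x * y) (hpos : 0 < D) :
    cos c * x * y / D ^ q = (cot v - cot u) * D ^ (1 - q) := by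
  have hu : sin u ≠ 0 := by intro h; simp [hD, h] at hpos
  have hv : sin v ≠ 0 := by intro h; simp [hD, h] at hpos
  have hcos : cos c = sin u * sin v * (cot v - cot u) := by
    rw [← sin_sub_eq_mul_cot_sub_cot hu hv, ← cos_pi_div_two_sub, ← hc, add_sub_cancel_right]
  rw [rpow_sub hpos, rpow_one, mul_div_assoc', hcos]
  congr 1
  rw [hD]
  ring

end LogDeriv

section SinProd

variable {α β γ δ t : ℝ}

/-- The product `D(t)`, with the shifted cosine written as a sine: the angles `α (1 - t)` and
`δ (1 - t)` decrease, the angles `β t` and `γ t` increase. In `stmt_16`,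
`(α, β, γ, δ) = (π / 2 - a, π / 2 - b, b, a)`. -/
noncomputable def sinProd (α β γ δ t : ℝ) : ℝ :=
  sin (α * (1 - t)) * sin (β * t) * sin (γ * t) * sin (δ * (1 - t))

lemma sinProd_swap (α β γ δ : ℝ) : sinProd α β γ δ = sinProd α γ β δ := by
  funext t
  simp only [sinProd]
  ring

lemma mul_mem_Ioo_of_mem_Ioo_zero_one {c m r : ℝ} (hc : c ∈ Set.Ioc 0 m)
    (hr : r ∈ Set.Ioo 0 1) : c * r ∈ Set.Ioo 0 m :=
  ⟨mul_pos hc.1 hr.1, (mul_lt_of_lt_one_right hc.1 hr.2).trans_le hc.2⟩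

lemma sin_pos_of_mem_Ioo_pi_div_two {x : ℝ} (hx : x ∈ Set.Ioo 0 (π / 2)) : 0 < sin x :=
  sin_pos_of_pos_of_lt_pi hx.1 (hx.2.trans (half_lt_self pi_pos))

lemma sinProd_pos (hα : α ∈ Set.Ioc 0 (π / 2)) (hβ : β ∈ Set.Ioc 0 (π / 2))
    (hγ : γ ∈ Set.Ioc 0 (π / 2)) (hδ : δ ∈ Set.Ioc 0 (π / 2)) (ht : t ∈ Set.Ioo 0 1) :
    0 < sinProd α β γ δ t := by
  have hsin : ∀ {c r : ℝ}, c ∈ Set.Ioc 0 (π / 2) → r ∈ Set.Ioo 0 1 → 0 < sin (c * r) :=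
    fun hc hr ↦ sin_pos_of_mem_Ioo_pi_div_two (mul_mem_Ioo_of_mem_Ioo_zero_one hc hr)
  have ht' := Set.Ioo.one_sub_mem ht
  exact mul_pos (mul_pos (mul_pos (hsin hα ht') (hsin hβ ht)) (hsin hγ ht)) (hsin hδ ht')

lemma differentiable_sinProd : Differentiable ℝ (sinProd α β γ δ) := by
  unfold sinProd
  fun_prop

lemma logDeriv_sinProd (h : sinProd α β γ δ t ≠ 0) :
    logDeriv (sinProd α β γ δ) t =
      β * cot (β * t) + γ * cot (γ * t) - α * cot (α * (1 - t)) - δ * cot (δ * (1 - t)) := by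
  have hinc : ∀ c : ℝ, logDeriv (fun r ↦ sin (c * r)) t = c * cot (c * t) := fun c ↦ by
    rw [logDeriv_sin_comp (by fun_prop)]
    simp
  have hdec : ∀ c : ℝ, logDeriv (fun r ↦ sin (c * (1 - r))) t = -(c * cot (c * (1 - t))) :=
    fun c ↦ by
      rw [logDeriv_sin_comp (by fun_prop), ((hasDerivAt_id' t).const_sub 1 |>.const_mul c).deriv]
      ring
  unfold sinProd at h ⊢
  have hδ := right_ne_zero_of_mul h
  have h' := left_ne_zero_of_mul h
  have hγ := right_ne_zero_of_mul h'
  have h'' := left_ne_zero_of_mul h'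
  rw [logDeriv_mul t h' hδ (by fun_prop) (by fun_prop),
    logDeriv_mul t h'' hγ (by fun_prop) (by fun_prop),
    logDeriv_mul t (left_ne_zero_of_mul h'') (right_ne_zero_of_mul h'') (by fun_prop)
      (by fun_prop), hinc, hinc, hdec, hdec]
  ring

lemma mul_cot_mul_mem_Ioo {c r : ℝ} (hr : 0 < r) (h : c * r ∈ Set.Ioo 0 (π / 2)) :
    c * cot (c * r) ∈ Set.Ioo 0 (1 / r) := by
  refine ⟨mul_pos (pos_of_mul_pos_left h.1 hr.le) (cot_pos_of_pos_of_lt_pi_div_two h.1 h.2), ?_⟩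
  rw [lt_div_iff₀ hr, mul_right_comm]
  exact mul_cot_lt_one h.1 h.2

lemma cot_mul_div_lt_div_sin_sq {c r : ℝ} (hr : 0 < r) (h : c * r ∈ Set.Ioo 0 (π / 2)) :
    cot (c * r) / r < c / sin (c * r) ^ 2 := by
  rw [div_lt_iff₀ hr, div_mul_eq_mul_div]
  exact cot_lt_div_sin_sq h.1 (sin_pos_of_mem_Ioo_pi_div_two h).ne'

lemma logDeriv_sinProd_mem_Ioo (hα : α ∈ Set.Ioc 0 (π / 2)) (hβ : β ∈ Set.Ioc 0 (π / 2))
    (hγ : γ ∈ Set.Ioc 0 (π / 2)) (hδ : δ ∈ Set.Ioc 0 (π / 2)) (ht : t ∈ Set.Ioo 0 1) :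
    logDeriv (sinProd α β γ δ) t ∈ Set.Ioo (-(2 / (1 - t))) (2 / t) := by
  have ht' := Set.Ioo.one_sub_mem ht
  have hbound : ∀ {c r : ℝ}, c ∈ Set.Ioc 0 (π / 2) → r ∈ Set.Ioo 0 1 →
      c * cot (c * r) ∈ Set.Ioo 0 (1 / r) :=
    fun hc hr ↦ mul_cot_mul_mem_Ioo hr.1 (mul_mem_Ioo_of_mem_Ioo_zero_one hc hr)
  obtain ⟨hα0, hα1⟩ := hbound hα ht'
  obtain ⟨hβ0, hβ1⟩ := hbound hβ ht
  obtain ⟨hγ0, hγ1⟩ := hbound hγ ht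
  obtain ⟨hδ0, hδ1⟩ := hbound hδ ht'
  rw [logDeriv_sinProd (sinProd_pos hα hβ hγ hδ ht).ne']
  constructor
  · linarith [add_div 1 1 (1 - t)]
  · linarith [add_div 1 1 t]

lemma mul_sub_mul_le_div_add_div {x y r s L p : ℝ} (hx : 0 ≤ x) (hy : 0 ≤ y) (hr : 0 < r)
    (hs : 0 < s) (hL : L ∈ Set.Icc (-(2 / s)) (2 / r)) (hp : p ∈ Set.Icc 0 (1 / 2)) :
    p * ((y - x) * L) ≤ y / r + x / s := by
  obtain ⟨hL0, hL1⟩ := hL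
  calc p * ((y - x) * L) = p * (y * L + x * -L) := by ring
    _ ≤ p * (y * (2 / r) + x * (2 / s)) := by
      have hp0 := hp.1
      gcongr
      exact neg_le.1 hL0
    _ ≤ 1 / 2 * (y * (2 / r) + x * (2 / s)) := by gcongr; exact hp.2
    _ = y / r + x / s := by ring

lemma hasDerivAt_cot_mul {c : ℝ} (h : sin (c * t) ≠ 0) :
    HasDerivAt (fun r ↦ cot (c * r)) (-(c / sin (c * t) ^ 2)) t :=
  (hasDerivAt_cot_comp ((hasDerivAt_id' t).const_mul c) h).congr_deriv (by rw [mul_one])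

lemma hasDerivAt_cot_mul_one_sub {c : ℝ} (h : sin (c * (1 - t)) ≠ 0) :
    HasDerivAt (fun r ↦ cot (c * (1 - r))) (c / sin (c * (1 - t)) ^ 2) t :=
  (hasDerivAt_cot_comp (((hasDerivAt_id' t).const_sub 1).const_mul c) h).congr_deriv
    (by rw [mul_neg_one, neg_div, neg_neg])

lemma deriv_cot_sub_cot_mul_sinProd_rpow_neg {p : ℝ} (hα : α ∈ Set.Ioc 0 (π / 2))
    (hβ : β ∈ Set.Ioc 0 (π / 2)) (hγ : γ ∈ Set.Ioc 0 (π / 2)) (hδ : δ ∈ Set.Ioc 0 (π / 2))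
    (hp : p ∈ Set.Icc 0 (1 / 2)) (ht : t ∈ Set.Ioo 0 1) :
    DifferentiableAt ℝ (fun r ↦ (cot (β * r) - cot (α * (1 - r))) * sinProd α β γ δ r ^ p) t ∧
      deriv (fun r ↦ (cot (β * r) - cot (α * (1 - r))) * sinProd α β γ δ r ^ p) t < 0 := by
  have ht' := Set.Ioo.one_sub_mem ht
  have hαt := mul_mem_Ioo_of_mem_Ioo_zero_one hα ht'
  have hβt := mul_mem_Ioo_of_mem_Ioo_zero_one hβ ht
  have hP := sinProd_pos hα hβ hγ hδ ht
  have hw := (hasDerivAt_cot_mul (sin_pos_of_mem_Ioo_pi_div_two hβt).ne').fun_sub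
    (hasDerivAt_cot_mul_one_sub (sin_pos_of_mem_Ioo_pi_div_two hαt).ne')
  have hderiv := hasDerivAt_mul_rpow (p := p) hw (differentiable_sinProd t) hP
  refine ⟨hderiv.differentiableAt, ?_⟩
  rw [hderiv.deriv]
  refine mul_neg_of_pos_of_neg (rpow_pos_of_pos hP p) ?_
  have hL := Set.Ioo_subset_Icc_self (logDeriv_sinProd_mem_Ioo hα hβ hγ hδ ht)
  have hgrowth := mul_sub_mul_le_div_add_div
    (cot_pos_of_pos_of_lt_pi_div_two hαt.1 hαt.2).le
    (cot_pos_of_pos_of_lt_pi_div_two hβt.1 hβt.2).le ht.1 ht'.1 hL hp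
  linarith [cot_mul_div_lt_div_sin_sq ht.1 hβt, cot_mul_div_lt_div_sin_sq ht'.1 hαt]

lemma cot_mul_sub_cot_mul_mul_add_le {c d r : ℝ} (hc : 0 < c) (hcd : c < d)
    (hsum : c + d ≤ π / 2) (hr : r ∈ Set.Ioo 0 1) :
    (cot (c * r) - cot (d * r)) * (c * cot (c * r) + d * cot (d * r)) ≤
      3 * (c / sin (c * r) ^ 2 - d / sin (d * r) ^ 2) := by
  have hsum' := mul_mem_Ioo_of_mem_Ioo_zero_one ⟨add_pos hc (hc.trans hcd), hsum⟩ hr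
  rw [add_mul] at hsum'
  refine le_of_mul_le_mul_left ?_ hr.1
  linear_combination cot_sub_cot_mul_add_le (mul_pos hc hr.1) (mul_lt_mul_of_pos_right hcd hr.1)
    hsum'.2.le

lemma deriv_cot_sub_cot_mul_sinProd_rpow_pos {p : ℝ} (hβ : β ∈ Set.Ioc 0 (π / 2))
    (hγ : γ ∈ Set.Ioc 0 (π / 2)) (hδ : 0 < δ) (hδα : δ < α) (hsum : δ + α ≤ π / 2)
    (hp : p ∈ Set.Icc 0 (1 / 3)) (ht : t ∈ Set.Ioo 0 1) :
    DifferentiableAt ℝ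
        (fun r ↦ (cot (δ * (1 - r)) - cot (α * (1 - r))) * sinProd α β γ δ r ^ p) t ∧
      0 < deriv
        (fun r ↦ (cot (δ * (1 - r)) - cot (α * (1 - r))) * sinProd α β γ δ r ^ p) t := by
  have ht' := Set.Ioo.one_sub_mem ht
  have hα' : α ∈ Set.Ioc 0 (π / 2) := ⟨hδ.trans hδα, by linarith⟩
  have hδ' : δ ∈ Set.Ioc 0 (π / 2) := ⟨hδ, by linarith⟩
  have hαt := mul_mem_Ioo_of_mem_Ioo_zero_one hα' ht'
  have hδt := mul_mem_Ioo_of_mem_Ioo_zero_one hδ' ht'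
  have hP := sinProd_pos hα' hβ hγ hδ' ht
  have hw := (hasDerivAt_cot_mul_one_sub (sin_pos_of_mem_Ioo_pi_div_two hδt).ne').fun_sub
    (hasDerivAt_cot_mul_one_sub (sin_pos_of_mem_Ioo_pi_div_two hαt).ne')
  have hderiv := hasDerivAt_mul_rpow (p := p) hw (differentiable_sinProd t) hP
  refine ⟨hderiv.differentiableAt, ?_⟩
  rw [hderiv.deriv]
  refine mul_pos (rpow_pos_of_pos hP p) ?_
  rw [logDeriv_sinProd hP.ne']
  have hβ0 := (mul_cot_mul_mem_Ioo ht.1 (mul_mem_Ioo_of_mem_Ioo_zero_one hβ ht)).1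
  have hγ0 := (mul_cot_mul_mem_Ioo ht.1 (mul_mem_Ioo_of_mem_Ioo_zero_one hγ ht)).1
  have hα0 := (mul_cot_mul_mem_Ioo ht'.1 hαt).1
  have hδ0 := (mul_cot_mul_mem_Ioo ht'.1 hδt).1
  have hgap : 0 < cot (δ * (1 - t)) - cot (α * (1 - t)) :=
    sub_pos.2 (cot_lt_cot_of_lt hδt.1 (mul_lt_mul_of_pos_right hδα ht'.1)
      (hαt.2.trans (half_lt_self pi_pos)))
  have hinc := mul_pos hgap (add_pos hβ0 hγ0)
  have hdec := mul_pos hgap (add_pos hδ0 hα0)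
  have hcomb : ∀ {x y : ℝ}, 0 < x → 0 < y → 0 < (1 / 3 - p) * x + p * y := fun hx hy ↦ by
    rcases hp.1.eq_or_lt with rfl | hp0
    · linarith
    · exact add_pos_of_nonneg_of_pos (mul_nonneg (sub_nonneg.2 hp.2) hx.le) (mul_pos hp0 hy)
  linarith [hcomb hdec hinc, cot_mul_sub_cot_mul_mul_add_le hδ hδα hsum ht']

lemma deriv_cos_mul_sin_mul_sin_div_sinProd_rpow_neg {c : ℝ → ℝ} {q : ℝ}
    (hc : ∀ r, c r + (α * (1 - r) - β * r) = π / 2) (hα : α ∈ Set.Ioc 0 (π / 2))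
    (hβ : β ∈ Set.Ioc 0 (π / 2)) (hγ : γ ∈ Set.Ioc 0 (π / 2)) (hδ : δ ∈ Set.Ioc 0 (π / 2))
    (hq : q ∈ Set.Icc (1 / 2) 1) (ht : t ∈ Set.Ioo 0 1) :
    DifferentiableAt ℝ
        (fun r ↦ cos (c r) * sin (γ * r) * sin (δ * (1 - r)) / sinProd α β γ δ r ^ q) t ∧
      deriv
        (fun r ↦ cos (c r) * sin (γ * r) * sin (δ * (1 - r)) / sinProd α β γ δ r ^ q) t < 0 := by
  have heq : Set.EqOn
      (fun r ↦ cos (c r) * sin (γ * r) * sin (δ * (1 - r)) / sinProd α β γ δ r ^ q)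
      (fun r ↦ (cot (β * r) - cot (α * (1 - r))) * sinProd α β γ δ r ^ (1 - q))
      (Set.Ioo 0 1) := fun r hr ↦
    cos_mul_sin_mul_sin_div_rpow (hc r) rfl (sinProd_pos hα hβ hγ hδ hr)
  have hnear := heq.eventuallyEq_of_mem (Ioo_mem_nhds ht.1 ht.2)
  have hp : 1 - q ∈ Set.Icc 0 (1 / 2) := ⟨by linarith [hq.2], by linarith [hq.1]⟩
  have h := deriv_cot_sub_cot_mul_sinProd_rpow_neg hα hβ hγ hδ hp ht
  exact ⟨h.1.congr_of_eventuallyEq hnear, hnear.deriv_eq ▸ h.2⟩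

lemma deriv_cos_mul_sin_mul_sin_div_sinProd_rpow_pos {c : ℝ → ℝ} {q : ℝ}
    (hc : ∀ r, c r + (α * (1 - r) - δ * (1 - r)) = π / 2) (hβ : β ∈ Set.Ioc 0 (π / 2))
    (hγ : γ ∈ Set.Ioc 0 (π / 2)) (hδ : 0 < δ) (hδα : δ < α) (hsum : δ + α ≤ π / 2)
    (hq : q ∈ Set.Icc (2 / 3) 1) (ht : t ∈ Set.Ioo 0 1) :
    DifferentiableAt ℝ (fun r ↦ cos (c r) * sin (β * r) * sin (γ * r) / sinProd α β γ δ r ^ q) t ∧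
      0 < deriv (fun r ↦ cos (c r) * sin (β * r) * sin (γ * r) / sinProd α β γ δ r ^ q) t := by
  have heq : Set.EqOn (fun r ↦ cos (c r) * sin (β * r) * sin (γ * r) / sinProd α β γ δ r ^ q)
      (fun r ↦ (cot (δ * (1 - r)) - cot (α * (1 - r))) * sinProd α β γ δ r ^ (1 - q))
      (Set.Ioo 0 1) := fun r hr ↦
    cos_mul_sin_mul_sin_div_rpow (hc r) (by rw [sinProd]; ring)
      (sinProd_pos ⟨hδ.trans hδα, by linarith⟩ hβ hγ ⟨hδ, by linarith⟩ hr)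
  have hnear := heq.eventuallyEq_of_mem (Ioo_mem_nhds ht.1 ht.2)
  have hp : 1 - q ∈ Set.Icc 0 (1 / 3) := ⟨by linarith [hq.2], by linarith [hq.1]⟩
  have h := deriv_cot_sub_cot_mul_sinProd_rpow_pos hβ hγ hδ hδα hsum hp ht
  exact ⟨h.1.congr_of_eventuallyEq hnear, hnear.deriv_eq ▸ h.2⟩

end SinProd

theorem stmt_16_general (a b q : ℝ) (ha : a ∈ Set.Ioo 0 (π / 2)) (hb : b ∈ Set.Ioo 0 (π / 2))
    (hq : q ∈ Set.Icc (2 / 3) 1) (D η₁ η₂ η₃ : ℝ → ℝ)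
    (hD : ∀ t, D t = cos ((π / 2 - a) * t + a) * sin ((π / 2 - b) * t) *
        sin (b * t) * sin (a * (1 - t)))
    (h1 : ∀ t, η₁ t = cos ((π - a - b) * t + a) * sin (b * t) * sin (a * (1 - t)) / D t ^ q)
    (h2 : ∀ t, η₂ t = cos ((π / 2 - a + b) * t + a) * sin ((π / 2 - b) * t) *
        sin (a * (1 - t)) / D t ^ q)
    (h3 : ∀ t, η₃ t = cos ((π / 2 - 2 * a) * t + 2 * a) * sin ((π / 2 - b) * t) *
        sin (b * t) / D t ^ q) :
    (∀ t ∈ Set.Ioo (0 : ℝ) 1, 0 < D t) ∧ ∀ t ∈ Set.Ioo (0 : ℝ) 1,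
      (DifferentiableAt ℝ η₁ t ∧ deriv η₁ t < 0) ∧ (DifferentiableAt ℝ η₂ t ∧ deriv η₂ t < 0) ∧
      (a < π / 4 → DifferentiableAt ℝ η₃ t ∧ 0 < deriv η₃ t) := by
  have ha' : a ∈ Set.Ioc 0 (π / 2) := ⟨ha.1, ha.2.le⟩
  have hb' : b ∈ Set.Ioc 0 (π / 2) := ⟨hb.1, hb.2.le⟩
  have hα : π / 2 - a ∈ Set.Ioc 0 (π / 2) := ⟨sub_pos.2 ha.2, sub_le_self _ ha.1.le⟩
  have hβ : π / 2 - b ∈ Set.Ioc 0 (π / 2) := ⟨sub_pos.2 hb.2, sub_le_self _ hb.1.le⟩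
  have hq' : q ∈ Set.Icc (1 / 2) 1 := ⟨by linarith [hq.1], hq.2⟩
  obtain rfl : D = sinProd (π / 2 - a) (π / 2 - b) b a := by
    funext t
    rw [hD, sinProd, ← sin_pi_div_two_sub]
    ring_nf
  refine ⟨fun t ht ↦ sinProd_pos hα hβ hb' ha' ht, fun t ht ↦ ⟨?_, ?_, fun ha4 ↦ ?_⟩⟩
  · rw [funext h1]
    exact deriv_cos_mul_sin_mul_sin_div_sinProd_rpow_neg (fun r ↦ by ring) hα hβ hb' ha' hq' ht
  · rw [funext h2, sinProd_swap _ _ b]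
    exact deriv_cos_mul_sin_mul_sin_div_sinProd_rpow_neg (fun r ↦ by ring) hα hb' hβ ha' hq' ht
  · rw [funext h3]
    exact deriv_cos_mul_sin_mul_sin_div_sinProd_rpow_pos (fun r ↦ by ring) hβ hb' ha.1
      (by linarith) (add_sub_cancel a _).le hq ht

theorem stmt_16 (a b : ℝ) (ha : a ∈ Set.Ioo 0 (π/4)) (hb : b ∈ Set.Ioo 0 (π/4))
    (D η₁ η₂ η₃ : ℝ → ℝ)
    (hD : ∀ t, D t = cos ((π/2 - a) * t + a) * sin ((π/2 - b) * t) *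
        sin (b * t) * sin (a * (1 - t)))
    (h1 : ∀ t, η₁ t = cos ((π - a - b) * t + a) * sin (b * t) * sin (a * (1 - t)) /
        D t ^ ((2:ℝ)/3))
    (h2 : ∀ t, η₂ t = cos ((π/2 - a + b) * t + a) * sin ((π/2 - b) * t) *
        sin (a * (1 - t)) / D t ^ ((2:ℝ)/3))
    (h3 : ∀ t, η₃ t = cos ((π/2 - 2*a) * t + 2*a) * sin ((π/2 - b) * t) *
        sin (b * t) / D t ^ ((2:ℝ)/3)) :
    (∀ t ∈ Set.Ioo (0:ℝ) 1, 0 < D t) ∧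
    ∀ t ∈ Set.Ioo (0:ℝ) 1,
      (DifferentiableAt ℝ η₁ t ∧ DifferentiableAt ℝ η₂ t ∧ DifferentiableAt ℝ η₃ t) ∧
      deriv η₁ t < 0 ∧ deriv η₂ t < 0 ∧ 0 < deriv η₃ t := by
  refine (stmt_16_general a b (2 / 3) ⟨ha.1, by linarith [ha.1, ha.2]⟩
    ⟨hb.1, by linarith [hb.1, hb.2]⟩ (by norm_num) D η₁ η₂ η₃ hD h1 h2 h3).imp_right fun h t ht ↦ ?_
  obtain ⟨⟨hη₁, hη₁'⟩, ⟨hη₂, hη₂'⟩, hη₃⟩ := h t ht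
  exact ⟨⟨hη₁, hη₂, (hη₃ ha.2).1⟩, hη₁', hη₂', (hη₃ ha.2).2⟩
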